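/- Let V be a real inner product space with dim V = n ≥ 2, let p ∈ V be nonzero, set t = ‖p‖²/2, and let a₁, b₁, a₂, b₂, c₁, d₁, c₂, d₂ ∈ ℝ with a₁·a₂ = 1 and (a₁ + 2t·b₁)·(a₂ + 2t·b₂) = 1. Define J : V × V → V × V by J(X,P) = (−(a₂·P + b₂·⟨p,P⟩·p), a₁·X + b₁·⟨p,X⟩·p) and the bilinear form G on V × V by G((X₁,P₁),(X₂,P₂)) = c₁·⟨X₁,X₂⟩ + d₁·⟨p,X₁⟩·⟨p,X₂⟩ + c₂·⟨P₁,P₂⟩ + d₂·⟨p,P₁⟩·⟨p,P₂⟩. Then G(Jx, Jy) = G(x, y) for all x, y ∈ V × V if and only if there exist real numbers λ and μ such that c₁ = λ·a₁, c₂ = λ·a₂, c₁ + 2t·d₁ = (λ + 2t·μ)·(a₁ + 2t·b₁) and c₂ + 2t·d₂ = (λ + 2t·μ)·(a₂ + 2t·b₂). -/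

import Mathlib

/-!
Both `J` and `G` preserve the splitting of `V` into `ℝ p` and its orthogonal complement, where they
act by the scalars `aᵢ`, `cᵢ` (on the complement) and `aᵢ + 2t bᵢ`, `cᵢ + 2t dᵢ` (on `ℝ p`). Hence
`G` is Hermitian iff `c₂ a₁² = c₁` and `(c₂ + 2t d₂) (a₁ + 2t b₁)² = c₁ + 2t d₁`, and, given the
normalisations of `a₁ a₂` and `(a₁ + 2t b₁) (a₂ + 2t b₂)`, these equations are the proportionality
relations. Testing on `(q, 0)` with `0 ≠ q ⊥ p` (this is where `2 ≤ dim V` enters) and on `(p, 0)`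
gives the two equations; conversely they yield the coefficient identity `coeff_of_scalar_relations`.
-/

open RealInnerProductSpace

lemma exists_ne_zero_inner_eq_zero {V : Type*} [NormedAddCommGroup V] [InnerProductSpace ℝ V]
    (hdim : 2 ≤ Module.finrank ℝ V) (p : V) : ∃ q : V, q ≠ 0 ∧ ⟪p, q⟫ = 0 := by
  have hne : (ℝ ∙ p)ᗮ ≠ ⊥ := by
    intro h
    have htop : (ℝ ∙ p) = ⊤ := Submodule.orthogonal_eq_bot_iff.mp h
    have hle := finrank_span_le_card (R := ℝ) ({p} : Set V)
    rw [htop, finrank_top] at hle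
    simp at hle
    omega
  obtain ⟨q, hq, hq0⟩ := Submodule.exists_mem_ne_zero_of_ne_bot hne
  exact ⟨q, hq0, Submodule.mem_orthogonal_singleton_iff_inner_right.mp hq⟩

/-- Scalar relations on `pᗮ` and on `ℝ p` (with `s = ‖p‖²`) determine the coefficient of
`⟪p, X⟫ * ⟪p, X'⟫` in the pulled-back form. -/
lemma coeff_of_scalar_relations {s a b c d c' d' : ℝ} (hs : s ≠ 0) (h : c * a ^ 2 = c')
    (h' : (c + s * d) * (a + s * b) ^ 2 = c' + s * d') :
    c * (2 * a * b + s * b ^ 2) + d * (a + s * b) ^ 2 = d' := by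
  apply mul_left_cancel₀ hs
  linear_combination h' - h

/-- Theorem 5 (pointwise): the natural diagonal metric `G` is Hermitian with respect to
the natural diagonal almost complex structure `J` iff the proportionality relations
(18) and (19) hold for some parameters `λ` and `μ`. -/
theorem hermitian_iff_proportionality {V : Type*} [NormedAddCommGroup V]
    [InnerProductSpace ℝ V]
    (n : ℕ) (hn : 2 ≤ n) (hdim : Module.finrank ℝ V = n)
    (p : V) (hp : p ≠ 0) (t : ℝ) (ht : t = ‖p‖ ^ 2 / 2)
    (a₁ b₁ a₂ b₂ c₁ d₁ c₂ d₂ : ℝ)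
    (h1 : a₁ * a₂ = 1) (h2 : (a₁ + 2 * t * b₁) * (a₂ + 2 * t * b₂) = 1)
    (J : V × V → V × V)
    (hJ : ∀ X P : V,
      J (X, P) = (-(a₂ • P + (b₂ * ⟪p, P⟫) • p), a₁ • X + (b₁ * ⟪p, X⟫) • p))
    (G : V × V → V × V → ℝ)
    (hG : ∀ X₁ P₁ X₂ P₂ : V, G (X₁, P₁) (X₂, P₂) =
      c₁ * ⟪X₁, X₂⟫ + d₁ * ⟪p, X₁⟫ * ⟪p, X₂⟫ +
      c₂ * ⟪P₁, P₂⟫ + d₂ * ⟪p, P₁⟫ * ⟪p, P₂⟫) :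
    (∀ x y : V × V, G (J x) (J y) = G x y) ↔
      ∃ lam μ : ℝ, c₁ = lam * a₁ ∧ c₂ = lam * a₂ ∧
        c₁ + 2 * t * d₁ = (lam + 2 * t * μ) * (a₁ + 2 * t * b₁) ∧
        c₂ + 2 * t * d₂ = (lam + 2 * t * μ) * (a₂ + 2 * t * b₂) := by
  have hpp : ⟪p, p⟫ = 2 * t := by rw [real_inner_self_eq_norm_sq, ht]; ring
  have hs : 2 * t ≠ 0 := by rw [← hpp]; exact inner_self_ne_zero.mpr hp
  constructor
  · intro H
    obtain ⟨q, hq0, hpq⟩ := exists_ne_zero_inner_eq_zero (hdim ▸ hn) p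
    have hqq : ⟪q, q⟫ ≠ 0 := inner_self_ne_zero.mpr hq0
    have hperp : c₂ * a₁ ^ 2 = c₁ := by
      have h := H (q, 0) (q, 0)
      simp only [hJ, hG, inner_add_left, inner_add_right, inner_neg_left, inner_neg_right,
        real_inner_smul_left, real_inner_smul_right, inner_zero_left, inner_zero_right, hpq] at h
      apply mul_right_cancel₀ hqq
      linear_combination h
    have hpar : (c₂ + 2 * t * d₂) * (a₁ + 2 * t * b₁) ^ 2 = c₁ + 2 * t * d₁ := by
      have h := H (p, 0) (p, 0)
      simp only [hJ, hG, inner_add_left, inner_add_right, inner_neg_left, inner_neg_right,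
        real_inner_smul_left, real_inner_smul_right, inner_zero_left, inner_zero_right, hpp] at h
      apply mul_right_cancel₀ hs
      linear_combination h
    -- `μ` solves `lam + 2 * t * μ = (c₁ + 2 * t * d₁) * (a₂ + 2 * t * b₂)`.
    have hμ : c₁ * a₂ + 2 * t * (((c₁ + 2 * t * d₁) * (a₂ + 2 * t * b₂) - c₁ * a₂) / (2 * t)) =
        (c₁ + 2 * t * d₁) * (a₂ + 2 * t * b₂) := by
      rw [mul_div_cancel₀ _ hs]; ring
    refine ⟨c₁ * a₂, ((c₁ + 2 * t * d₁) * (a₂ + 2 * t * b₂) - c₁ * a₂) / (2 * t), ?_, ?_, ?_, ?_⟩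
    · linear_combination -c₁ * h1
    · linear_combination a₂ ^ 2 * hperp - c₂ * (a₁ * a₂ + 1) * h1
    · rw [hμ]
      linear_combination -(c₁ + 2 * t * d₁) * h2
    · rw [hμ]
      linear_combination (a₂ + 2 * t * b₂) ^ 2 * hpar -
        (c₂ + 2 * t * d₂) * ((a₁ + 2 * t * b₁) * (a₂ + 2 * t * b₂) + 1) * h2
  · rintro ⟨lam, μ, e1, e2, e3, e4⟩ ⟨X₁, P₁⟩ ⟨X₂, P₂⟩
    have hX₀ : c₂ * a₁ ^ 2 = c₁ := by
      linear_combination a₁ ^ 2 * e2 - e1 + lam * a₁ * h1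
    have hP₀ : c₁ * a₂ ^ 2 = c₂ := by
      linear_combination a₂ ^ 2 * e1 - e2 + lam * a₂ * h1
    have hX := coeff_of_scalar_relations (b := b₁) (d := d₂) (d' := d₁) hs hX₀ (by
      linear_combination (a₁ + 2 * t * b₁) ^ 2 * e4 - e3 +
        (lam + 2 * t * μ) * (a₁ + 2 * t * b₁) * h2)
    have hP := coeff_of_scalar_relations (b := b₂) (d := d₁) (d' := d₂) hs hP₀ (by
      linear_combination (a₂ + 2 * t * b₂) ^ 2 * e3 - e4 +
        (lam + 2 * t * μ) * (a₂ + 2 * t * b₂) * h2)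
    simp only [hJ, hG, inner_add_left, inner_add_right, inner_neg_left, inner_neg_right,
      real_inner_smul_left, real_inner_smul_right, hpp]
    rw [real_inner_comm p X₁, real_inner_comm p P₁]
    linear_combination ⟪X₁, X₂⟫ * hX₀ + ⟪P₁, P₂⟫ * hP₀ + ⟪p, X₁⟫ * ⟪p, X₂⟫ * hX +
      ⟪p, P₁⟫ * ⟪p, P₂⟫ * hP
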